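/- Let A, B, C be real symmetric n×n matrices (not necessarily traceless) with ‖A‖² + ‖B‖² + ‖C‖² = 1. Then ‖[A,B]‖² + ‖[B,C]‖² + ‖[C,A]‖² ≤ 1/2. (This is the DDVV inequality P(n,3).) -/

import Mathlib

open Matrix BigOperators

/-- Frobenius norm squared of a real `n × n` matrix: the sum of the squares of all entries. -/
noncomputable def frobSq {n : ℕ} (A : Matrix (Fin n) (Fin n) ℝ) : ℝ :=
  ∑ i, ∑ j, (A i j) ^ 2

/-- The commutator `[A, B] = A * B - B * A`. -/
def mcomm {n : ℕ} (A B : Matrix (Fin n) (Fin n) ℝ) : Matrix (Fin n) (Fin n) ℝ :=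
  A * B - B * A

lemma frobSq_nonneg' {n : ℕ} (A : Matrix (Fin n) (Fin n) ℝ) : 0 ≤ frobSq A := by
  unfold frobSq
  exact Finset.sum_nonneg fun i _ => Finset.sum_nonneg fun j _ => sq_nonneg _

lemma frobSq_smul' {n : ℕ} (t : ℝ) (A : Matrix (Fin n) (Fin n) ℝ) :
    frobSq (t • A) = t ^ 2 * frobSq A := by
  simp only [frobSq, Finset.mul_sum, Matrix.smul_apply, smul_eq_mul, mul_pow]

lemma frobSq_rot {n : ℕ} (c s : ℝ) (X Y : Matrix (Fin n) (Fin n) ℝ) :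
    frobSq (c • X + s • Y) + frobSq (c • Y - s • X) = (c ^ 2 + s ^ 2) * (frobSq X + frobSq Y) := by
  simp only [frobSq, Finset.mul_sum, mul_add, ← Finset.sum_add_distrib]
  refine Finset.sum_congr rfl fun i _ => Finset.sum_congr rfl fun j _ => ?_
  simp only [Matrix.add_apply, Matrix.sub_apply, Matrix.smul_apply, smul_eq_mul]
  ring

lemma frobSq_mcomm_swap {n : ℕ} (X Y : Matrix (Fin n) (Fin n) ℝ) :
    frobSq (mcomm X Y) = frobSq (mcomm Y X) := by
  have : mcomm X Y = (-1 : ℝ) • mcomm Y X := by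
    simp [mcomm]
  rw [this, frobSq_smul']
  norm_num

lemma frobSq_entry_le {n : ℕ} (A : Matrix (Fin n) (Fin n) ℝ) (i j : Fin n) :
    (A i j) ^ 2 ≤ frobSq A := by
  unfold frobSq
  calc (A i j) ^ 2 ≤ ∑ j, (A i j) ^ 2 :=
        Finset.single_le_sum (f := fun j => (A i j) ^ 2) (fun _ _ => sq_nonneg _) (Finset.mem_univ j)
    _ ≤ _ := Finset.single_le_sum (f := fun i => ∑ j, (A i j) ^ 2)
        (fun _ _ => Finset.sum_nonneg fun _ _ => sq_nonneg _) (Finset.mem_univ i)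

lemma frobSq_two_entries {n : ℕ} (A : Matrix (Fin n) (Fin n) ℝ) (i j : Fin n) (h : i ≠ j) :
    (A i j) ^ 2 + (A j i) ^ 2 ≤ frobSq A := by
  have h1 : frobSq A = ∑ p : Fin n × Fin n, (A p.1 p.2) ^ 2 := by
    rw [frobSq, Fintype.sum_prod_type]
  rw [h1]
  have h2 : ((i, j) : Fin n × Fin n) ≠ (j, i) := by
    intro e; exact h (Prod.ext_iff.1 e).1
  rw [← Finset.sum_pair (f := fun p : Fin n × Fin n => (A p.1 p.2) ^ 2) h2]
  exact Finset.sum_le_sum_of_subset_of_nonneg (Finset.subset_univ _) fun _ _ _ => sq_nonneg _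

/-- Two different squared differences add to at most three times the sum of squares. -/
lemma two_diffs {n : ℕ} (l : Fin n → ℝ) (p q i j : Fin n) (hpq : p ≠ q)
    (h1 : ¬ (i = p ∧ j = q)) (h2 : ¬ (i = q ∧ j = p)) :
    (l p - l q) ^ 2 + (l i - l j) ^ 2 ≤ 3 * ∑ k, l k ^ 2 := by
  have key : ∀ s : Finset (Fin n), ∑ k ∈ s, l k ^ 2 ≤ ∑ k, l k ^ 2 := fun s =>
    Finset.sum_le_sum_of_subset_of_nonneg (Finset.subset_univ _) fun _ _ _ => sq_nonneg _
  have three : ∀ x y z : Fin n, x ≠ y → x ≠ z → y ≠ z →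
      (l x - l y) ^ 2 + (l x - l z) ^ 2 ≤ 3 * ∑ k, l k ^ 2 := by
    intro x y z hxy hxz hyz
    have := key {x, y, z}
    rw [Finset.sum_insert (by simp [hxy, hxz]), Finset.sum_pair hyz] at this
    nlinarith [sq_nonneg (l x + l y + l z), sq_nonneg (l y - l z)]
  have hpair : (l p - l q) ^ 2 ≤ 3 * ∑ k, l k ^ 2 := by
    have := key {p, q}
    rw [Finset.sum_pair hpq] at this
    nlinarith [sq_nonneg (l p + l q), sq_nonneg (l p), sq_nonneg (l q)]
  by_cases hij : i = j
  · subst hij; simpa using hpair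
  by_cases hip : i = p
  · subst hip
    exact three i q j hpq hij (fun e => h1 ⟨rfl, e.symm⟩)
  by_cases hiq : i = q
  · subst hiq
    have := three i p j (Ne.symm hpq) hij (fun e => h2 ⟨rfl, e.symm⟩)
    nlinarith
  by_cases hjp : j = p
  · subst hjp
    have := three j q i hpq (Ne.symm hij) (Ne.symm hiq)
    nlinarith
  by_cases hjq : j = q
  · subst hjq
    have := three j p i (Ne.symm hpq) (Ne.symm hij) (Ne.symm hip)
    nlinarith
  have := key {p, q, i, j}
  rw [Finset.sum_insert (by simp [hpq, Ne.symm hip, Ne.symm hjp]),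
    Finset.sum_insert (by simp [Ne.symm hiq, Ne.symm hjq]), Finset.sum_pair hij] at this
  nlinarith [sq_nonneg (l p + l q), sq_nonneg (l i + l j), sq_nonneg (l p), sq_nonneg (l q),
    sq_nonneg (l i), sq_nonneg (l j)]

lemma frobSq_diagonal' {n : ℕ} (l : Fin n → ℝ) : frobSq (Matrix.diagonal l) = ∑ k, l k ^ 2 := by
  unfold frobSq
  refine Finset.sum_congr rfl fun i _ => ?_
  rw [Finset.sum_eq_single i]
  · simp
  · intro j _ h; simp [Matrix.diagonal_apply_ne _ (Ne.symm h)]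
  · simp

lemma frobSq_mcomm_diagonal {n : ℕ} (l : Fin n → ℝ) (B : Matrix (Fin n) (Fin n) ℝ) :
    frobSq (mcomm (Matrix.diagonal l) B) = ∑ i, ∑ j, (l i - l j) ^ 2 * (B i j) ^ 2 := by
  unfold frobSq mcomm
  refine Finset.sum_congr rfl fun i _ => Finset.sum_congr rfl fun j _ => ?_
  simp only [Matrix.sub_apply, Matrix.diagonal_mul, Matrix.mul_diagonal]
  ring

lemma key_diag {n : ℕ} (l : Fin n → ℝ) (B C : Matrix (Fin n) (Fin n) ℝ)
    (hB : B.IsSymm) (hC : C.IsSymm)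
    (h : ∀ c s : ℝ, frobSq (c • B + s • C) ≤ (c ^ 2 + s ^ 2) * ∑ k, l k ^ 2) :
    frobSq (mcomm (Matrix.diagonal l) B) + frobSq (mcomm (Matrix.diagonal l) C) ≤
      (∑ k, l k ^ 2) * ((∑ k, l k ^ 2) + frobSq B + frobSq C) := by
  rw [frobSq_mcomm_diagonal, frobSq_mcomm_diagonal]
  set a := ∑ k, l k ^ 2 with ha
  have ha0 : 0 ≤ a := Finset.sum_nonneg fun _ _ => sq_nonneg _
  have hb : frobSq B ≤ a := by simpa using h 1 0
  have hc : frobSq C ≤ a := by simpa using h 0 1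
  have hb0 := frobSq_nonneg' B
  have hc0 := frobSq_nonneg' C
  have e1 : (∑ i, ∑ j, (l i - l j) ^ 2 * (B i j) ^ 2) + (∑ i, ∑ j, (l i - l j) ^ 2 * (C i j) ^ 2)
      = ∑ p : Fin n × Fin n, (l p.1 - l p.2) ^ 2 * ((B p.1 p.2) ^ 2 + (C p.1 p.2) ^ 2) := by
    rw [Fintype.sum_prod_type]
    simp only [← Finset.sum_add_distrib, mul_add]
  have e2 : frobSq B + frobSq C
      = ∑ p : Fin n × Fin n, ((B p.1 p.2) ^ 2 + (C p.1 p.2) ^ 2) := by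
    rw [Fintype.sum_prod_type]
    simp only [frobSq, ← Finset.sum_add_distrib]
  rw [e1]
  set r : Fin n × Fin n → ℝ := fun p => (B p.1 p.2) ^ 2 + (C p.1 p.2) ^ 2 with hr
  have hr0 : ∀ p, 0 ≤ r p := fun p => by simp only [hr]; positivity
  change ∑ p : Fin n × Fin n, (l p.1 - l p.2) ^ 2 * r p ≤ _
  change _ = ∑ p, r p at e2
  by_cases hall : ∀ p q, (l p - l q) ^ 2 ≤ 3 / 2 * a
  · have : ∑ p : Fin n × Fin n, (l p.1 - l p.2) ^ 2 * r p ≤ 3 / 2 * a * ∑ p, r p := by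
      rw [Finset.mul_sum]
      exact Finset.sum_le_sum fun p _ => mul_le_mul_of_nonneg_right (hall _ _) (hr0 p)
    rw [← e2] at this
    nlinarith
  · push Not at hall
    obtain ⟨p, q, hpq'⟩ := hall
    have hpq : p ≠ q := by
      rintro rfl
      simp at hpq'; linarith
    set m := (l p - l q) ^ 2 with hm
    have hm2 : m ≤ 2 * a := by
      have : ∑ k ∈ {p, q}, l k ^ 2 ≤ a :=
        Finset.sum_le_sum_of_subset_of_nonneg (Finset.subset_univ _) fun _ _ _ => sq_nonneg _
      rw [Finset.sum_pair hpq] at this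
      nlinarith [sq_nonneg (l p + l q)]
    have hrs : r (q, p) = r (p, q) := by
      simp only [hr]; rw [hB.apply p q, hC.apply p q]
    have hr1 : 2 * r (p, q) ≤ a := by
      have h3 := h (B p q) (C p q)
      have h4 := frobSq_two_entries (B p q • B + C p q • C) p q hpq
      simp only [Matrix.add_apply, Matrix.smul_apply, smul_eq_mul] at h4
      rw [hB.apply p q, hC.apply p q] at h4
      have h5 : 2 * r (p, q) * r (p, q) ≤ a * r (p, q) := by
        simp only [hr]; nlinarith
      rcases (hr0 (p, q)).eq_or_lt with h6 | h6
      · rw [← h6]; simpa using ha0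
      · exact le_of_mul_le_mul_right h5 h6
    have hne : ((p, q) : Fin n × Fin n) ≠ (q, p) := by
      intro e; exact hpq (Prod.ext_iff.1 e).1
    have hbd : ∑ x : Fin n × Fin n, (l x.1 - l x.2) ^ 2 * r x ≤
        ∑ x : Fin n × Fin n, ((3 * a - m) * r x + (if x = (p, q) then (2 * m - 3 * a) * r x else 0)
          + (if x = (q, p) then (2 * m - 3 * a) * r x else 0)) := by
      refine Finset.sum_le_sum fun x _ => ?_
      by_cases h1 : x = (p, q)
      · subst h1
        simp only [hne, if_true, if_false]
        apply le_of_eq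
        rw [hm]; ring
      by_cases h2 : x = (q, p)
      · subst h2
        simp only [hne.symm, if_true, if_false]
        apply le_of_eq
        rw [hm]; ring
      simp only [h1, h2, if_false, add_zero]
      refine mul_le_mul_of_nonneg_right ?_ (hr0 x)
      have := two_diffs l p q x.1 x.2 hpq (fun e => h1 (Prod.ext e.1 e.2))
        (fun e => h2 (Prod.ext e.1 e.2))
      linarith
    rw [Finset.sum_add_distrib, Finset.sum_add_distrib, ← Finset.mul_sum,
      Finset.sum_ite_eq' , Finset.sum_ite_eq', ← e2] at hbd
    simp only [Finset.mem_univ, if_true, hrs] at hbd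
    have h7 : (2 * m - 3 * a) * (2 * r (p, q)) ≤ (2 * m - 3 * a) * a :=
      mul_le_mul_of_nonneg_left hr1 (by linarith)
    have h8 : 0 ≤ (2 * a - m) * (2 * a - (frobSq B + frobSq C)) :=
      mul_nonneg (by linarith) (by linarith)
    nlinarith

lemma frobSq_eq_trace {n : ℕ} (A : Matrix (Fin n) (Fin n) ℝ) : frobSq A = (A * Aᵀ).trace := by
  simp only [frobSq, Matrix.trace, Matrix.diag, Matrix.mul_apply, Matrix.transpose_apply, sq]

lemma frobSq_conj {n : ℕ} (U A : Matrix (Fin n) (Fin n) ℝ) (hU : Uᵀ * U = 1) :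
    frobSq (U * A * Uᵀ) = frobSq A := by
  rw [frobSq_eq_trace, frobSq_eq_trace]
  have : U * A * Uᵀ * (U * A * Uᵀ)ᵀ = U * (A * Aᵀ * Uᵀ) := by
    simp only [Matrix.transpose_mul, Matrix.transpose_transpose]
    calc U * A * Uᵀ * (U * (Aᵀ * Uᵀ)) = U * A * (Uᵀ * U) * (Aᵀ * Uᵀ) := by
          simp only [Matrix.mul_assoc]
      _ = _ := by rw [hU]; simp only [Matrix.mul_assoc, Matrix.mul_one]
  rw [this, Matrix.trace_mul_comm, Matrix.mul_assoc, hU, Matrix.mul_one]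

lemma mcomm_conj {n : ℕ} (U A B : Matrix (Fin n) (Fin n) ℝ) (hU : Uᵀ * U = 1) :
    mcomm (U * A * Uᵀ) (U * B * Uᵀ) = U * mcomm A B * Uᵀ := by
  have h : ∀ X Y : Matrix (Fin n) (Fin n) ℝ, U * X * Uᵀ * (U * Y * Uᵀ) = U * (X * Y) * Uᵀ := by
    intro X Y
    calc U * X * Uᵀ * (U * Y * Uᵀ) = U * X * (Uᵀ * U) * (Y * Uᵀ) := by
          simp only [Matrix.mul_assoc]
      _ = _ := by rw [hU]; simp only [Matrix.mul_assoc, Matrix.mul_one]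
  simp only [mcomm, h, Matrix.mul_sub, Matrix.sub_mul]

lemma exists_diag {n : ℕ} (A : Matrix (Fin n) (Fin n) ℝ) (hA : A.IsSymm) :
    ∃ (U : Matrix (Fin n) (Fin n) ℝ) (l : Fin n → ℝ), Uᵀ * U = 1 ∧ U * Uᵀ = 1 ∧
      A = U * Matrix.diagonal l * Uᵀ := by
  have hH : A.IsHermitian := by
    rw [Matrix.IsHermitian, Matrix.conjTranspose_eq_transpose_of_trivial]; exact hA
  refine ⟨hH.eigenvectorUnitary, hH.eigenvalues, ?_, ?_, ?_⟩
  · have := Unitary.coe_star_mul_self hH.eigenvectorUnitary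
    rwa [Matrix.star_eq_conjTranspose, Matrix.conjTranspose_eq_transpose_of_trivial] at this
  · have := Unitary.coe_mul_star_self hH.eigenvectorUnitary
    rwa [Unitary.coe_star, Matrix.star_eq_conjTranspose, Matrix.conjTranspose_eq_transpose_of_trivial] at this
  · have := hH.spectral_theorem
    rw [Unitary.conjStarAlgAut_apply, Matrix.star_eq_conjTranspose,
      Matrix.conjTranspose_eq_transpose_of_trivial] at this
    simpa [Function.comp_def] using this

lemma key_gen {n : ℕ} (A B C : Matrix (Fin n) (Fin n) ℝ)
    (hA : A.IsSymm) (hB : B.IsSymm) (hC : C.IsSymm)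
    (h : ∀ c s : ℝ, frobSq (c • B + s • C) ≤ (c ^ 2 + s ^ 2) * frobSq A) :
    frobSq (mcomm A B) + frobSq (mcomm A C) ≤
      frobSq A * (frobSq A + frobSq B + frobSq C) := by
  obtain ⟨U, l, hU, hU', rfl⟩ := exists_diag A hA
  have hback : ∀ X : Matrix (Fin n) (Fin n) ℝ, U * (Uᵀ * X * U) * Uᵀ = X := by
    intro X
    calc U * (Uᵀ * X * U) * Uᵀ = (U * Uᵀ) * X * (U * Uᵀ) := by simp only [Matrix.mul_assoc]
      _ = X := by rw [hU']; simp
  have hsym : ∀ X : Matrix (Fin n) (Fin n) ℝ, X.IsSymm → (Uᵀ * X * U).IsSymm := by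
    intro X hX
    rw [Matrix.IsSymm, Matrix.transpose_mul, Matrix.transpose_mul, Matrix.transpose_transpose,
      hX.eq, Matrix.mul_assoc]
  have hB' := hsym B hB
  have hC' := hsym C hC
  rw [← hback B, ← hback C] at h ⊢
  generalize Uᵀ * B * U = B' at *
  generalize Uᵀ * C * U = C' at *
  rw [mcomm_conj _ _ _ hU, mcomm_conj _ _ _ hU]
  simp only [frobSq_conj _ _ hU]
  rw [frobSq_diagonal']
  refine key_diag l B' C' hB' hC' fun c s => ?_
  have := h c s
  rw [frobSq_conj _ _ hU, frobSq_diagonal'] at this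
  have e : c • (U * B' * Uᵀ) + s • (U * C' * Uᵀ) = U * (c • B' + s • C') * Uᵀ := by
    simp [Matrix.mul_add, Matrix.add_mul]
  rwa [e, frobSq_conj _ _ hU] at this

lemma continuous_frobSq' {n : ℕ} : Continuous (frobSq (n := n)) := by
  unfold frobSq
  refine continuous_finsetSum _ fun i _ => continuous_finsetSum _ fun j _ => ?_
  exact (continuous_id.matrix_elem i j).pow 2

/-- The sum of the squared norms of the three commutators. -/
noncomputable def dS {n : ℕ} (A B C : Matrix (Fin n) (Fin n) ℝ) : ℝ :=
  frobSq (mcomm A B) + frobSq (mcomm B C) + frobSq (mcomm C A)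

lemma dS_rot {n : ℕ} (A B C : Matrix (Fin n) (Fin n) ℝ) (c s : ℝ) (h : c ^ 2 + s ^ 2 = 1) :
    dS (c • B + s • C) (c • C - s • B) A = dS A B C := by
  have e1 : mcomm (c • B + s • C) (c • C - s • B) = mcomm B C := by
    have : mcomm (c • B + s • C) (c • C - s • B) = (c ^ 2 + s ^ 2) • mcomm B C := by
      simp only [mcomm, add_mul, mul_add, sub_mul, mul_sub, smul_mul_assoc, mul_smul_comm,
        smul_sub, smul_add, smul_smul]
      module
    rw [this, h, one_smul]
  have e2 : mcomm A (c • B + s • C) = c • mcomm A B + s • mcomm A C := by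
    simp only [mcomm, add_mul, mul_add, smul_mul_assoc, mul_smul_comm]
    module
  have e3 : mcomm A (c • C - s • B) = c • mcomm A C - s • mcomm A B := by
    simp only [mcomm, sub_mul, mul_sub, smul_mul_assoc, mul_smul_comm]
    module
  have := frobSq_rot c s (mcomm A B) (mcomm A C)
  unfold dS
  rw [frobSq_mcomm_swap _ A, e1, e2, e3, frobSq_mcomm_swap C A]
  rw [h] at this
  linarith

lemma exists_max {n : ℕ} (A B C : Matrix (Fin n) (Fin n) ℝ)
    (hA : A.IsSymm) (hB : B.IsSymm) (hC : C.IsSymm)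
    (hsum : frobSq A + frobSq B + frobSq C = 1) :
    ∃ X Y Z : Matrix (Fin n) (Fin n) ℝ, X.IsSymm ∧ Y.IsSymm ∧ Z.IsSymm ∧
      frobSq X + frobSq Y + frobSq Z = 1 ∧
      (∀ A B C : Matrix (Fin n) (Fin n) ℝ, A.IsSymm → B.IsSymm → C.IsSymm →
        frobSq A + frobSq B + frobSq C = 1 → dS A B C ≤ dS X Y Z) ∧
      (∀ A B C : Matrix (Fin n) (Fin n) ℝ, A.IsSymm → B.IsSymm → C.IsSymm →
        frobSq A + frobSq B + frobSq C = 1 → dS A B C = dS X Y Z → frobSq A ≤ frobSq X) := by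
  let M := Matrix (Fin n) (Fin n) ℝ
  let K : Set (M × M × M) := {T | T.1.IsSymm ∧ T.2.1.IsSymm ∧ T.2.2.IsSymm ∧
    frobSq T.1 + frobSq T.2.1 + frobSq T.2.2 = 1}
  have c1 : Continuous (fun T : M × M × M => T.1) := continuous_fst
  have c2 : Continuous (fun T : M × M × M => T.2.1) := continuous_fst.comp continuous_snd
  have c3 : Continuous (fun T : M × M × M => T.2.2) := continuous_snd.comp continuous_snd
  have hdS : Continuous (fun T : M × M × M => dS T.1 T.2.1 T.2.2) := by
    unfold dS mcomm
    exact ((continuous_frobSq'.comp ((c1.matrix_mul c2).sub (c2.matrix_mul c1))).add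
      (continuous_frobSq'.comp ((c2.matrix_mul c3).sub (c3.matrix_mul c2)))).add
      (continuous_frobSq'.comp ((c3.matrix_mul c1).sub (c1.matrix_mul c3)))
  have hKc : IsClosed K := by
    refine IsClosed.inter (isClosed_eq c1.matrix_transpose c1)
      (IsClosed.inter (isClosed_eq c2.matrix_transpose c2)
      (IsClosed.inter (isClosed_eq c3.matrix_transpose c3) (isClosed_eq ?_ continuous_const)))
    exact ((continuous_frobSq'.comp c1).add (continuous_frobSq'.comp c2)).add
      (continuous_frobSq'.comp c3)
  let Q : Set M := Set.pi Set.univ fun _ => Set.pi Set.univ fun _ => Set.Icc (-1 : ℝ) 1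
  have hQ : IsCompact Q := isCompact_univ_pi fun _ => isCompact_univ_pi fun _ => isCompact_Icc
  have hmem : ∀ X : M, frobSq X ≤ 1 → X ∈ Q := by
    intro X hX i _ j _
    have := (frobSq_entry_le X i j).trans hX
    exact abs_le.1 ((sq_le_one_iff_abs_le_one _).1 this)
  have hK : IsCompact K := by
    refine (hQ.prod (hQ.prod hQ)).of_isClosed_subset hKc ?_
    rintro ⟨X, Y, Z⟩ ⟨_, _, _, h⟩
    simp only at h
    have := frobSq_nonneg' X
    have := frobSq_nonneg' Y
    have := frobSq_nonneg' Z
    exact ⟨hmem _ (by linarith), hmem _ (by linarith), hmem _ (by linarith)⟩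
  obtain ⟨T, hT, hTm⟩ := hK.exists_isMaxOn ⟨(A, B, C), hA, hB, hC, hsum⟩ hdS.continuousOn
  let K' : Set (M × M × M) := K ∩ {T' | dS T'.1 T'.2.1 T'.2.2 = dS T.1 T.2.1 T.2.2}
  have hK' : IsCompact K' := hK.inter_right (isClosed_eq hdS continuous_const)
  obtain ⟨W, hW, hWm⟩ := hK'.exists_isMaxOn ⟨T, hT, rfl⟩ (continuous_frobSq'.comp c1).continuousOn
  obtain ⟨⟨w1, w2, w3, w4⟩, w5⟩ := hW
  refine ⟨W.1, W.2.1, W.2.2, w1, w2, w3, w4, ?_, ?_⟩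
  · intro A B C hA hB hC hs
    have w5' : dS W.1 W.2.1 W.2.2 = dS T.1 T.2.1 T.2.2 := w5
    rw [w5']
    exact isMaxOn_iff.1 hTm (A, B, C) ⟨hA, hB, hC, hs⟩
  · intro A B C hA hB hC hs he
    have w5' : dS W.1 W.2.1 W.2.2 = dS T.1 T.2.1 T.2.2 := w5
    exact isMaxOn_iff.1 hWm (A, B, C) ⟨⟨hA, hB, hC, hs⟩, he.trans w5'⟩

lemma dS_smul {n : ℕ} (t : ℝ) (A B C : Matrix (Fin n) (Fin n) ℝ) :
    dS (t • A) (t • B) (t • C) = t ^ 4 * dS A B C := by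
  have h : ∀ X Y : Matrix (Fin n) (Fin n) ℝ, mcomm (t • X) (t • Y) = (t ^ 2) • mcomm X Y := by
    intro X Y
    simp only [mcomm, smul_mul_assoc, mul_smul_comm]
    module
  simp only [dS, h, frobSq_smul']
  ring

lemma dS_smul_left {n : ℕ} (t : ℝ) (A B C : Matrix (Fin n) (Fin n) ℝ) :
    dS (t • A) B C = t ^ 2 * (frobSq (mcomm A B) + frobSq (mcomm A C)) + frobSq (mcomm B C) := by
  have h1 : mcomm (t • A) B = t • mcomm A B := by
    simp only [mcomm, smul_mul_assoc, mul_smul_comm, smul_sub]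
  have h2 : mcomm (t • A) C = t • mcomm A C := by
    simp only [mcomm, smul_mul_assoc, mul_smul_comm, smul_sub]
  rw [dS, frobSq_mcomm_swap C, h1, h2, frobSq_smul', frobSq_smul']
  ring

/-- P(n,3): for real symmetric `n × n` matrices `A, B, C` with
`‖A‖² + ‖B‖² + ‖C‖² = 1`, one has `‖[A,B]‖² + ‖[B,C]‖² + ‖[C,A]‖² ≤ 1/2`. -/
theorem ddvv_P_n_3 (n : ℕ) (A B C : Matrix (Fin n) (Fin n) ℝ)
    (hA : A.IsSymm) (hB : B.IsSymm) (hC : C.IsSymm)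
    (hsum : frobSq A + frobSq B + frobSq C = 1) :
    frobSq (mcomm A B) + frobSq (mcomm B C) + frobSq (mcomm C A) ≤ 1 / 2 := by
  obtain ⟨X, Y, Z, hX, hY, hZ, h1, hmax, hlex⟩ := exists_max A B C hA hB hC hsum
  refine (hmax A B C hA hB hC hsum).trans ?_
  have rotle : ∀ c s : ℝ, c ^ 2 + s ^ 2 = 1 → frobSq (c • Y + s • Z) ≤ frobSq X := by
    intro c s hcs
    refine hlex (c • Y + s • Z) (c • Z - s • Y) X ((hY.smul c).add (hZ.smul s))
      ((hZ.smul c).sub (hY.smul s)) hX ?_ (dS_rot X Y Z c s hcs)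
    rw [frobSq_rot, hcs]; linarith
  have hom : ∀ c s : ℝ, frobSq (c • Y + s • Z) ≤ (c ^ 2 + s ^ 2) * frobSq X := by
    intro c s
    rcases (by positivity : 0 ≤ c ^ 2 + s ^ 2).eq_or_lt with h0 | h0
    · have hc : c = 0 := by nlinarith [sq_nonneg c, sq_nonneg s]
      have hs : s = 0 := by nlinarith [sq_nonneg c, sq_nonneg s]
      subst hc hs
      simp [frobSq]
    · set t := Real.sqrt (c ^ 2 + s ^ 2) with ht
      have ht0 : 0 < t := Real.sqrt_pos.2 h0
      have ht2 : t ^ 2 = c ^ 2 + s ^ 2 := Real.sq_sqrt h0.le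
      have := rotle (c / t) (s / t) (by
        rw [div_pow, div_pow, ← add_div, ht2, div_self h0.ne'])
      have e : c • Y + s • Z = t • ((c / t) • Y + (s / t) • Z) := by
        rw [smul_add, smul_smul, smul_smul, mul_div_cancel₀ _ ht0.ne', mul_div_cancel₀ _ ht0.ne']
      rw [e, frobSq_smul', ← ht2]
      exact mul_le_mul_of_nonneg_left this (sq_nonneg t)
  have hkey := key_gen X Y Z hX hY hZ hom
  rw [h1, mul_one] at hkey
  have hx0 := frobSq_nonneg' X
  have hy0 := frobSq_nonneg' Y
  have hz0 := frobSq_nonneg' Z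
  have hyx : frobSq Y ≤ frobSq X := by simpa using hom 1 0
  have hzx : frobSq Z ≤ frobSq X := by simpa using hom 0 1
  by_contra hcon
  push Not at hcon
  -- homogeneous form of maximality
  have hhom : ∀ A B C : Matrix (Fin n) (Fin n) ℝ, A.IsSymm → B.IsSymm → C.IsSymm →
      0 < frobSq A + frobSq B + frobSq C →
      dS A B C ≤ dS X Y Z * (frobSq A + frobSq B + frobSq C) ^ 2 := by
    intro A B C hA hB hC hpos
    set N := frobSq A + frobSq B + frobSq C with hN
    set t := (Real.sqrt N)⁻¹ with ht
    have ht2 : t ^ 2 = N⁻¹ := by rw [ht, inv_pow, Real.sq_sqrt hpos.le]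
    have := hmax (t • A) (t • B) (t • C) (hA.smul t) (hB.smul t) (hC.smul t) (by
      simp only [frobSq_smul', ← mul_add, ht2]
      exact inv_mul_cancel₀ hpos.ne')
    rw [dS_smul, show t ^ 4 = (t ^ 2) ^ 2 by ring, ht2, inv_pow] at this
    rwa [inv_mul_le_iff₀ (by positivity), mul_comm] at this
  set M := dS X Y Z with hM
  set e := (2 * M - 1) / (2 * M) with he
  have hM0 : 0 < M := by linarith
  have he0 : 0 < e := div_pos (by linarith) (by linarith)
  have he1 : e < 1 := by rw [he, div_lt_one (by linarith)]; linarith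
  have heM : M * e = M - 1 / 2 := by rw [he]; field_simp
  have hs2 : Real.sqrt (1 - e) ^ 2 = 1 - e := Real.sq_sqrt (by linarith)
  have hfin := hhom (Real.sqrt (1 - e) • X) Y Z (hX.smul _) hY hZ (by
    rw [frobSq_smul', hs2]; nlinarith)
  rw [dS_smul_left, frobSq_smul', hs2] at hfin
  have hMe : M = frobSq (mcomm X Y) + frobSq (mcomm X Z) + frobSq (mcomm Y Z) := by
    have := dS_smul_left 1 X Y Z
    rw [one_smul] at this
    rw [hM, this]; ring
  have ha3 : 1 / 3 ≤ frobSq X := by linarith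
  have ha1 : frobSq X ≤ 1 := by linarith
  have e4 : (1 - e) * frobSq X + frobSq Y + frobSq Z = 1 - e * frobSq X := by linarith
  rw [e4] at hfin
  set p := frobSq (mcomm X Y) + frobSq (mcomm X Z) with hp
  set a := frobSq X with ha
  have f1 : e * (M * (2 * a - e * a ^ 2)) ≤ e * p := by nlinarith
  have f2 := le_of_mul_le_mul_left f1 he0
  have f3 : a * (M * (2 - e * a)) ≤ a * 1 := by nlinarith
  have f4 := le_of_mul_le_mul_left f3 (by linarith)
  have f5 : M * e * a ≤ M * e := mul_le_of_le_one_right (by positivity) ha1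
  nlinarith
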